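/- (Lemma 2) Let n ∈ Im(Ca') with g(n,n) = 1 (a point of the pseudosphere S^{2,4}), and let X, Y, Z ∈ Im(Ca') with g(X,n) = g(Y,n) = g(Z,n) = 0 (tangent vectors to S^{2,4} at n). With J X := n×X the Cayley almost complex structure and Ω(X,Y,Z) := g(X×Y, Z), one has Ω(JX, Y, Z) = Ω(X, JY, Z) = Ω(X, Y, JZ); explicitly, g((n×X)×Y, Z) = g(X×(n×Y), Z) = g(X×Y, n×Z). -/

import Mathlib

-- The split octonion algebra Ca' as pairs of real quaternions.
noncomputable section

abbrev Ca : Type := Quaternion ℝ × Quaternion ℝ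

namespace Ca

/-- Split octonion multiplication: (a,b)·(c,d) = (ac + (conj d)b, da + b(conj c)). -/
def mul (x y : Ca) : Ca :=
  (x.1 * y.1 + star y.2 * x.2, y.2 * x.1 + x.2 * star y.1)

/-- The unit (1,0). -/
def one : Ca := (1, 0)

/-- Conjugation conj(a,b) = (conj a, −b). -/
def conj (x : Ca) : Ca := (star x.1, -x.2)

/-- Real part Re(a,b) = re a. -/
def re (x : Ca) : ℝ := x.1.re

/-- Norm form N(a,b) = ‖a‖² − ‖b‖², of signature (4,4). -/
def N (x : Ca) : ℝ := Quaternion.normSq x.1 - Quaternion.normSq x.2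

/-- The symmetric bilinear form ⟨x,y⟩ = (N(x+y) − N(x) − N(y))/2. -/
def bil (x y : Ca) : ℝ := (N (x + y) - N x - N y) / 2

/-- The vector cross product on Im(Ca'): X × Y := X·Y + g(X,Y)·1. -/
def cross (X Y : Ca) : Ca := mul X Y + bil X Y • one

end Ca

/-!
`Ca'` is a composition algebra: `N (xy) = N x * N y`. Polarising twice gives the exchange identity
`⟨xy, zw⟩ + ⟨zy, xw⟩ = 2⟨x, z⟩⟨y, w⟩`. Taking `z = 1` or `w = 1` shows that multiplication by an
imaginary element, on either side, is skew-adjoint; hence `Ω` is skew-symmetric in its first two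
arguments. For vectors orthogonal to `n` the product `n × X` is `nX`, so
`Ω(X, JY, Z) = ⟨X(nY), Z⟩ = -⟨nY, XZ⟩ = ⟨XY, nZ⟩ = Ω(X, Y, JZ)`, where the third equality is the
exchange identity with `⟨X, n⟩ = 0`. Skew-symmetry then moves `J` to the first argument.
-/

namespace Ca

lemma bil_eq_re (x y : Ca) : bil x y = (x.1 * star y.1).re - (x.2 * star y.2).re := by
  simp only [bil, N, Prod.fst_add, Prod.snd_add, Quaternion.normSq_add]
  ring

lemma bil_comm (x y : Ca) : bil x y = bil y x := by
  simp only [bil, add_comm x y]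
  ring

lemma bil_add_left (x y z : Ca) : bil (x + y) z = bil x z + bil y z := by
  simp only [bil_eq_re, Prod.fst_add, Prod.snd_add, add_mul, Quaternion.re_add]
  ring

lemma bil_add_right (x y z : Ca) : bil x (y + z) = bil x y + bil x z := by
  rw [bil_comm, bil_add_left, bil_comm y, bil_comm z]

lemma bil_smul_left (r : ℝ) (x y : Ca) : bil (r • x) y = r * bil x y := by
  simp only [bil_eq_re, Prod.smul_fst, Prod.smul_snd, smul_mul_assoc, Quaternion.re_smul,
    smul_eq_mul]
  ring

lemma re_one : re one = 1 := rfl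

lemma bil_one_right (x : Ca) : bil x one = re x := by
  simp [bil_eq_re, one, re, Quaternion.re_zero]

lemma bil_one_left (x : Ca) : bil one x = re x := by
  rw [bil_comm, bil_one_right]

lemma N_add (x y : Ca) : N (x + y) = N x + N y + 2 * bil x y := by
  simp only [bil]
  ring

protected lemma add_mul (x y z : Ca) : mul (x + y) z = mul x z + mul y z := by
  ext1 <;> simp only [mul, Prod.fst_add, Prod.snd_add] <;> noncomm_ring

protected lemma mul_add (x y z : Ca) : mul x (y + z) = mul x y + mul x z := by
  ext1 <;> simp only [mul, Prod.fst_add, Prod.snd_add, star_add] <;> noncomm_ring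

protected lemma one_mul (x : Ca) : mul one x = x := by
  simp [mul, one]

protected lemma mul_one (x : Ca) : mul x one = x := by
  simp [mul, one]

lemma quaternion_re_mul_comm {R : Type*} [CommRing R] (p q : Quaternion R) :
    (p * q).re = (q * p).re := by
  simp only [Quaternion.re_mul]
  ring

lemma N_mul (x y : Ca) : N (mul x y) = N x * N y := by
  have cross_terms : (x.1 * y.1 * star (star y.2 * x.2)).re =
      (y.2 * x.1 * star (x.2 * star y.1)).re := by
    simpa only [star_mul, star_star, mul_assoc] using
      quaternion_re_mul_comm (x.1 * y.1 * star x.2) y.2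
  simp only [N, mul, Quaternion.normSq_add, map_mul, Quaternion.normSq_star, cross_terms]
  ring

lemma bil_mul_mul_left (x y z : Ca) : bil (mul x y) (mul x z) = N x * bil y z := by
  simp only [bil, ← Ca.mul_add, N_mul]
  ring

lemma bil_mul_mul_add_bil_mul_mul (x y z w : Ca) :
    bil (mul x y) (mul z w) + bil (mul z y) (mul x w) = 2 * bil x z * bil y w := by
  have h := bil_mul_mul_left (x + z) y w
  simp only [Ca.add_mul, bil_add_left, bil_add_right, bil_mul_mul_left, N_add] at h
  linarith

lemma bil_mul_left (x y z : Ca) :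
    bil (mul x y) z = 2 * re x * bil y z - bil y (mul x z) := by
  have h := bil_mul_mul_add_bil_mul_mul x y one z
  rw [Ca.one_mul, Ca.one_mul, bil_one_right] at h
  linarith

lemma bil_mul_right (x y z : Ca) :
    bil (mul x y) z = 2 * re y * bil x z - bil x (mul z y) := by
  have h := bil_mul_mul_add_bil_mul_mul x y z one
  rw [Ca.mul_one, Ca.mul_one, bil_one_right, bil_comm _ x] at h
  linarith

lemma re_mul (x y : Ca) : re (mul x y) = 2 * re x * re y - bil x y := by
  rw [← bil_one_right, bil_mul_left, bil_one_right, Ca.mul_one, bil_comm y]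

lemma cross_eq_mul {x y : Ca} (h : bil x y = 0) : cross x y = mul x y := by
  rw [cross, h, zero_smul, add_zero]

lemma bil_cross_left (x y z : Ca) :
    bil (cross x y) z = bil (mul x y) z + bil x y * re z := by
  rw [cross, bil_add_left, bil_smul_left, bil_one_left]

lemma re_cross (x y : Ca) : re (cross x y) = 2 * re x * re y := by
  rw [← bil_one_right, bil_cross_left, bil_one_right, re_mul]
  rw [re_one]
  ring

lemma bil_cross_swap {x y z : Ca} (hx : re x = 0) (hy : re y = 0) (hz : re z = 0) :
    bil (cross x y) z = -bil (cross y x) z := by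
  have hxy : bil (mul x y) z = -bil (mul y x) z := calc
    bil (mul x y) z = -bil x (mul z y) := by rw [bil_mul_right, hy]; ring
    _ = -bil (mul z y) x := by rw [bil_comm]
    _ = bil y (mul z x) := by rw [bil_mul_left, hz]; ring
    _ = -bil (mul y x) z := by rw [bil_mul_right, hx]; ring
  simpa only [bil_cross_left, hz, mul_zero, add_zero] using hxy

lemma bil_cross_cross_right {n x y z : Ca} (hx : re x = 0) (hz : re z = 0)
    (hxn : bil x n = 0) (hyn : bil y n = 0) (hzn : bil z n = 0) :
    bil (cross x (cross n y)) z = bil (cross x y) (cross n z) := by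
  have hnz : re (mul n z) = 0 := by rw [re_mul, hz, bil_comm, hzn]; ring
  have exchange := bil_mul_mul_add_bil_mul_mul x y n z
  rw [hxn] at exchange
  rw [cross_eq_mul (x := n) (y := y) (by rw [bil_comm, hyn]),
    cross_eq_mul (x := n) (y := z) (by rw [bil_comm, hzn])]
  calc bil (cross x (mul n y)) z
      = bil (mul x (mul n y)) z := by rw [bil_cross_left, hz]; ring
    _ = -bil (mul n y) (mul x z) := by rw [bil_mul_left, hx]; ring
    _ = bil (mul x y) (mul n z) := by linarith
    _ = bil (cross x y) (mul n z) := by rw [bil_cross_left, hnz]; ring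

end Ca

theorem Omega_J_property_general (n X Y Z : Ca)
    (hX : Ca.re X = 0) (hY : Ca.re Y = 0) (hZ : Ca.re Z = 0)
    (hXn : Ca.bil X n = 0) (hYn : Ca.bil Y n = 0) (hZn : Ca.bil Z n = 0) :
    Ca.bil (Ca.cross (Ca.cross n X) Y) Z = Ca.bil (Ca.cross X (Ca.cross n Y)) Z ∧
    Ca.bil (Ca.cross X (Ca.cross n Y)) Z = Ca.bil (Ca.cross X Y) (Ca.cross n Z) := by
  have hJX : Ca.re (Ca.cross n X) = 0 := by rw [Ca.re_cross, hX, mul_zero]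
  have hJZ : Ca.re (Ca.cross n Z) = 0 := by rw [Ca.re_cross, hZ, mul_zero]
  have hYZ := Ca.bil_cross_cross_right hX hZ hXn hYn hZn
  refine ⟨?_, hYZ⟩
  calc Ca.bil (Ca.cross (Ca.cross n X) Y) Z
      = -Ca.bil (Ca.cross Y (Ca.cross n X)) Z := Ca.bil_cross_swap hJX hY hZ
    _ = -Ca.bil (Ca.cross Y X) (Ca.cross n Z) := by
        rw [Ca.bil_cross_cross_right hY hZ hYn hXn hZn]
    _ = Ca.bil (Ca.cross X Y) (Ca.cross n Z) := (Ca.bil_cross_swap hX hY hJZ).symm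
    _ = Ca.bil (Ca.cross X (Ca.cross n Y)) Z := hYZ.symm

/-- Lemma 2: Ω(JX,Y,Z) = Ω(X,JY,Z) = Ω(X,Y,JZ) for the Cayley almost
complex structure J X = n×X on the pseudosphere S^{2,4}. -/
theorem Omega_J_property (n X Y Z : Ca)
    (hn : Ca.re n = 0) (hnn : Ca.bil n n = 1)
    (hX : Ca.re X = 0) (hY : Ca.re Y = 0) (hZ : Ca.re Z = 0)
    (hXn : Ca.bil X n = 0) (hYn : Ca.bil Y n = 0) (hZn : Ca.bil Z n = 0) :
    Ca.bil (Ca.cross (Ca.cross n X) Y) Z = Ca.bil (Ca.cross X (Ca.cross n Y)) Z ∧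
    Ca.bil (Ca.cross X (Ca.cross n Y)) Z = Ca.bil (Ca.cross X Y) (Ca.cross n Z) := by
  exact Omega_J_property_general n X Y Z hX hY hZ hXn hYn hZn
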